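/- Weighted Sobolev embedding in dimension three: Let N = 3 and K(y) = exp(|y|²/4) for y ∈ ℝ³. If v : ℝ³ → ℝ is locally integrable with a weak gradient g : ℝ³ → ℝ³ such that ∫_{ℝ³} K(y)( |v(y)|² + |g(y)|² ) dy < ∞, then ∫_{ℝ³} K(y) |v(y)|⁶ dy < ∞; i.e. H¹(K) ⊆ L^{2*}(K) with 2* = 2N/(N−2) = 6. -/

import Mathlib

open MeasureTheory

/-- `g` is a weak gradient of the locally integrable function `f` on `ℝ³`. -/
def HasWeakGradient (f : EuclideanSpace ℝ (Fin 3) → ℝ)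
    (g : EuclideanSpace ℝ (Fin 3) → EuclideanSpace ℝ (Fin 3)) : Prop :=
  MeasureTheory.LocallyIntegrable f volume ∧
  ∀ φ : EuclideanSpace ℝ (Fin 3) → ℝ, ContDiff ℝ (⊤ : ℕ∞) φ → HasCompactSupport φ →
    ∀ i : Fin 3,
      ∫ y, f y * fderiv ℝ φ y (EuclideanSpace.single i 1) = -∫ y, g y i * φ y

/-!
Multiply `v` by the weight `w = exp (a|y|²)` with `a = c/q`, so that `|w v|^q = exp (c|y|²) |v|^q`.
Since `q > p`, both `w` and `|∇w| = 2a|y|w` are bounded by a multiple of `exp ((c/p)|y|²)`: the room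
between the two exponents absorbs the factor `|y|`. Hence `w v` lies in the unweighted space
`W^{1,p}`, and the Gagliardo–Nirenberg–Sobolev inequality, extended from `C¹_c` to weakly
differentiable functions by cutoff and mollification, puts it in `L^q`. The theorem is the case
`p = 2`, `q = 6`, `c = 1/4`.
-/

open Filter Module
open scoped ContDiff Convolution ENNReal NNReal Topology

section BilinearIntegrability

variable {X E₁ E₂ E₃ : Type*} [TopologicalSpace X] [T2Space X] [MeasurableSpace X] [BorelSpace X]
  [NormedAddCommGroup E₁] [NormedSpace ℝ E₁] [SecondCountableTopologyEither X E₁]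
  [NormedAddCommGroup E₂] [NormedSpace ℝ E₂] [NormedAddCommGroup E₃] [NormedSpace ℝ E₃]
  {μ : Measure X} {c : X → E₁} {f : X → E₂}

lemma integrableOn_bilin_of_isCompact {K : Set X} (L : E₁ →L[ℝ] E₂ →L[ℝ] E₃)
    (hc : Continuous c) (hf : LocallyIntegrable f μ) (hK : IsCompact K) :
    IntegrableOn (fun x => L (c x) (f x)) K μ := by
  obtain ⟨C, hC⟩ := hK.exists_bound_of_continuousOn hc.continuousOn
  refine ((hf.integrableOn_isCompact hK).norm.const_mul (‖L‖ * C)).mono'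
    (L.aestronglyMeasurable_comp₂ hc.aestronglyMeasurable
      (hf.integrableOn_isCompact hK).aestronglyMeasurable) ?_
  filter_upwards [ae_restrict_mem hK.measurableSet] with x hx
  exact (L.le_opNorm₂ _ _).trans (by gcongr; exact hC x hx)

lemma locallyIntegrable_bilin [LocallyCompactSpace X] (L : E₁ →L[ℝ] E₂ →L[ℝ] E₃)
    (hc : Continuous c) (hf : LocallyIntegrable f μ) :
    LocallyIntegrable (fun x => L (c x) (f x)) μ :=
  locallyIntegrable_iff.2 fun _ hK => integrableOn_bilin_of_isCompact L hc hf hK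

lemma integrable_bilin_of_hasCompactSupport (L : E₁ →L[ℝ] E₂ →L[ℝ] E₃)
    (hc : Continuous c) (hcs : HasCompactSupport c) (hf : LocallyIntegrable f μ) :
    Integrable (fun x => L (c x) (f x)) μ := by
  refine (integrableOn_iff_integrable_of_support_subset fun x hx => ?_).1
    (integrableOn_bilin_of_isCompact L hc hf hcs)
  refine subset_tsupport c fun h => hx ?_
  simp [h]

end BilinearIntegrability

section Young

lemma lintegral_mul_rpow_le {α : Type*} [MeasurableSpace α] {μ : Measure α} {ρ h : α → ℝ≥0∞}
    (hρ : AEMeasurable ρ μ) (hh : AEMeasurable h μ) {p : ℝ} (hp : 1 ≤ p) :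
    (∫⁻ x, ρ x * h x ∂μ) ^ p ≤ (∫⁻ x, ρ x ∂μ) ^ (p - 1) * ∫⁻ x, ρ x * h x ^ p ∂μ := by
  have hp0 : 0 < p := by linarith
  have hsplit (x : α) : ρ x * h x = ρ x ^ (1 - p⁻¹) * (ρ x * h x ^ p) ^ p⁻¹ := by
    rw [ENNReal.mul_rpow_of_nonneg _ _ (by positivity), ENNReal.rpow_rpow_inv hp0.ne', ← mul_assoc,
      ← ENNReal.rpow_add_of_nonneg _ _ (by linarith [inv_le_one_of_one_le₀ hp]) (by positivity)]
    simp
  calc (∫⁻ x, ρ x * h x ∂μ) ^ p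
      ≤ ((∫⁻ x, ρ x ∂μ) ^ (1 - p⁻¹) * (∫⁻ x, ρ x * h x ^ p ∂μ) ^ p⁻¹) ^ p := by
        simp only [hsplit]
        gcongr
        exact ENNReal.lintegral_mul_norm_pow_le hρ (hρ.mul (hh.pow_const p))
          (by linarith [inv_le_one_of_one_le₀ hp]) (by positivity) (by ring)
    _ = (∫⁻ x, ρ x ∂μ) ^ (p - 1) * ∫⁻ x, ρ x * h x ^ p ∂μ := by
        rw [ENNReal.mul_rpow_of_nonneg _ _ hp0.le, ENNReal.rpow_inv_rpow hp0.ne',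
          ← ENNReal.rpow_mul, sub_mul, one_mul, inv_mul_cancel₀ hp0.ne']

variable {A : Type*} [AddCommGroup A] [MeasurableSpace A] {μ : Measure A} {E₁ E₂ E₃ : Type*}
  [NormedAddCommGroup E₁] [NormedSpace ℝ E₁] [NormedAddCommGroup E₂] [NormedSpace ℝ E₂]
  [NormedAddCommGroup E₃] [NormedSpace ℝ E₃]

lemma enorm_convolution_le_lconvolution (L : E₁ →L[ℝ] E₂ →L[ℝ] E₃) (ρ : A → E₁) (h : A → E₂)
    (x : A) :
    ‖(ρ ⋆[L, μ] h) x‖ₑ ≤ ‖L‖ₑ * ((fun t => ‖ρ t‖ₑ) ⋆ₗ[μ] fun t => ‖h t‖ₑ) x := by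
  rw [lconvolution_def, ← lintegral_const_mul' _ _ enorm_ne_top]
  refine (enorm_integral_le_lintegral_enorm _).trans (lintegral_mono fun t => ?_)
  rw [← mul_assoc, ← sub_eq_neg_add]
  exact (L (ρ t)).le_opENorm _ |>.trans (by gcongr; exact L.le_opENorm _)

variable [MeasurableAdd₂ A] [MeasurableNeg A] [SFinite μ] [μ.IsAddLeftInvariant]

lemma lintegral_lconvolution_rpow_le {ρ h : A → ℝ≥0∞} (hρ : AEMeasurable ρ μ)
    (hh : AEMeasurable h μ) {p : ℝ} (hp : 1 ≤ p) :
    ∫⁻ x, (ρ ⋆ₗ[μ] h) x ^ p ∂μ ≤ (∫⁻ x, ρ x ∂μ) ^ p * ∫⁻ x, h x ^ p ∂μ := by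
  have hreflect (x : A) : AEMeasurable (fun t => h (-t + x)) μ := by
    simpa only [sub_eq_neg_add, Function.comp_def] using
      hh.comp_quasiMeasurePreserving (quasiMeasurePreserving_sub_left μ x)
  have hshift (t : A) : AEMeasurable (fun x => h (-t + x) ^ p) μ :=
    (hh.comp_quasiMeasurePreserving
      (measurePreserving_add_left μ (-t)).quasiMeasurePreserving).pow_const p
  calc ∫⁻ x, (ρ ⋆ₗ[μ] h) x ^ p ∂μ
      ≤ ∫⁻ x, (∫⁻ t, ρ t ∂μ) ^ (p - 1) * ∫⁻ t, ρ t * h (-t + x) ^ p ∂μ ∂μ :=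
        lintegral_mono fun x => lintegral_mul_rpow_le hρ (hreflect x) hp
    _ = (∫⁻ t, ρ t ∂μ) ^ (p - 1) * ∫⁻ t, ρ t * ∫⁻ x, h (-t + x) ^ p ∂μ ∂μ := by
        have hjoint : AEMeasurable (fun z : A × A => ρ z.2 * h (-z.2 + z.1) ^ p) (μ.prod μ) := by
          fun_prop
        rw [lintegral_const_mul'' _ hjoint.lintegral_prod_right', lintegral_lintegral_swap hjoint]
        simp only [lintegral_const_mul'' _ (hshift _)]
    _ = (∫⁻ t, ρ t ∂μ) ^ (p - 1) * ((∫⁻ t, ρ t ∂μ) * ∫⁻ x, h x ^ p ∂μ) := by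
        simp only [lintegral_add_left_eq_self fun x => h x ^ p]
        rw [lintegral_mul_const'' _ hρ]
    _ = (∫⁻ x, ρ x ∂μ) ^ p * ∫⁻ x, h x ^ p ∂μ := by
        nth_rw 2 [← ENNReal.rpow_one (∫⁻ t, ρ t ∂μ)]
        rw [← mul_assoc, ← ENNReal.rpow_add_of_nonneg _ _ (sub_nonneg.2 hp) zero_le_one,
          sub_add_cancel]

lemma eLpNorm_convolution_le (L : E₁ →L[ℝ] E₂ →L[ℝ] E₃) {ρ : A → E₁} {h : A → E₂}
    (hρ : AEStronglyMeasurable ρ μ) (hh : AEStronglyMeasurable h μ) {p : ℝ≥0} (hp : 1 ≤ p) :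
    eLpNorm (ρ ⋆[L, μ] h) p μ ≤ ‖L‖ₑ * eLpNorm ρ 1 μ * eLpNorm h p μ := by
  have hp0 : p ≠ 0 := (zero_lt_one.trans_le hp).ne'
  refine (ENNReal.rpow_le_rpow_iff (NNReal.coe_pos.2 (pos_iff_ne_zero.2 hp0))).1 ?_
  rw [ENNReal.mul_rpow_of_nonneg _ _ p.coe_nonneg, ENNReal.mul_rpow_of_nonneg _ _ p.coe_nonneg,
    eLpNorm_nnreal_pow_eq_lintegral hp0, eLpNorm_nnreal_pow_eq_lintegral hp0,
    eLpNorm_one_eq_lintegral_enorm, mul_assoc]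
  calc ∫⁻ x, ‖(ρ ⋆[L, μ] h) x‖ₑ ^ (p : ℝ) ∂μ
      ≤ ∫⁻ x, ‖L‖ₑ ^ (p : ℝ) * ((fun t => ‖ρ t‖ₑ) ⋆ₗ[μ] fun t => ‖h t‖ₑ) x ^ (p : ℝ) ∂μ := by
        refine lintegral_mono fun x => ?_
        rw [← ENNReal.mul_rpow_of_nonneg _ _ p.coe_nonneg]
        gcongr
        exact enorm_convolution_le_lconvolution L ρ h x
    _ ≤ ‖L‖ₑ ^ (p : ℝ) * ((∫⁻ x, ‖ρ x‖ₑ ∂μ) ^ (p : ℝ) * ∫⁻ x, ‖h x‖ₑ ^ (p : ℝ) ∂μ) := by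
        rw [lintegral_const_mul' _ _ (ENNReal.rpow_ne_top_of_nonneg p.coe_nonneg enorm_ne_top)]
        gcongr
        exact lintegral_lconvolution_rpow_le hρ.enorm hh.enorm (by exact_mod_cast hp)

end Young

section WeakDerivative

variable {E F : Type*} [NormedAddCommGroup E] [NormedSpace ℝ E] [MeasurableSpace E]
  [NormedAddCommGroup F] [NormedSpace ℝ F] {μ : Measure E}

/-- `G` is a weak (Fréchet) derivative of `f` with respect to `μ`: both are locally integrable, and
integration by parts holds against every test function. The equation takes place in `E →L[ℝ] F`;
evaluating it at a vector `w` gives the usual identity for the derivative in direction `w`. -/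
structure HasWeakFDeriv (f : E → F) (G : E → E →L[ℝ] F) (μ : Measure E) : Prop where
  locallyIntegrable : LocallyIntegrable f μ
  locallyIntegrable_fderiv : LocallyIntegrable G μ
  integral_smulRight : ∀ φ : E → ℝ, ContDiff ℝ ∞ φ → HasCompactSupport φ →
    ∫ y, (fderiv ℝ φ y).smulRight (f y) ∂μ = -∫ y, φ y • G y ∂μ

variable [FiniteDimensional ℝ E] [BorelSpace E] {f : E → F} {G : E → E →L[ℝ] F}

lemma integrable_smulRight_of_hasCompactSupport {A : E → StrongDual ℝ E} (hA : Continuous A)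
    (hAc : HasCompactSupport A) (hf : LocallyIntegrable f μ) :
    Integrable (fun y => (A y).smulRight (f y)) μ :=
  integrable_bilin_of_hasCompactSupport (.smulRightL ℝ E F) hA hAc hf

lemma HasWeakFDeriv.smul (h : HasWeakFDeriv f G μ) {η : E → ℝ} (hη : ContDiff ℝ ∞ η) :
    HasWeakFDeriv (fun y => η y • f y) (fun y => η y • G y + (fderiv ℝ η y).smulRight (f y)) μ where
  locallyIntegrable := locallyIntegrable_bilin (.lsmul ℝ ℝ) hη.continuous h.locallyIntegrable
  locallyIntegrable_fderiv :=
    (locallyIntegrable_bilin (.lsmul ℝ ℝ) hη.continuous h.locallyIntegrable_fderiv).add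
      (locallyIntegrable_bilin (.smulRightL ℝ E F) (hη.continuous_fderiv (by simp))
        h.locallyIntegrable)
  integral_smulRight φ hφ hφc := by
    have hdη := hη.continuous_fderiv (by simp)
    have hdφ := hφ.continuous_fderiv (by simp)
    have hφG : Integrable (fun y => (φ y * η y) • G y) μ :=
      integrable_bilin_of_hasCompactSupport (.lsmul ℝ ℝ) (hφ.mul hη).continuous hφc.mul_right
        h.locallyIntegrable_fderiv
    have hφf : Integrable (fun y => (φ y • fderiv ℝ η y).smulRight (f y)) μ :=
      integrable_smulRight_of_hasCompactSupport (hφ.continuous.smul hdη)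
        hφc.smul_right h.locallyIntegrable
    have hηf : Integrable (fun y => (η y • fderiv ℝ φ y).smulRight (f y)) μ :=
      integrable_smulRight_of_hasCompactSupport (hη.continuous.smul hdφ)
        ((hφc.fderiv ℝ).smul_left (f := η)) h.locallyIntegrable
    have hparts : ∫ y, (φ y • fderiv ℝ η y).smulRight (f y) ∂μ
        + ∫ y, (η y • fderiv ℝ φ y).smulRight (f y) ∂μ = -∫ y, (φ y * η y) • G y ∂μ := by
      rw [← integral_add hφf hηf, ← h.integral_smulRight _ (hφ.mul hη) hφc.mul_right]
      congr with y : 1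
      rw [fderiv_fun_mul (hφ.differentiable (by simp) y) (hη.differentiable (by simp) y)]
      ext w
      simp [add_smul]
    calc ∫ y, (fderiv ℝ φ y).smulRight (η y • f y) ∂μ
        = ∫ y, (η y • fderiv ℝ φ y).smulRight (f y) ∂μ := by
          congr with y w
          simp [smul_smul, mul_comm]
      _ = -(∫ y, (φ y * η y) • G y ∂μ + ∫ y, (φ y • fderiv ℝ η y).smulRight (f y) ∂μ) := by
          rw [neg_add, ← hparts]
          abel
      _ = -∫ y, φ y • (η y • G y + (fderiv ℝ η y).smulRight (f y)) ∂μ := by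
          rw [← integral_add hφG hφf]
          congr with y w
          simp [smul_smul]

lemma HasWeakFDeriv.fderiv_convolution [μ.IsAddHaarMeasure] (h : HasWeakFDeriv f G μ) {ρ : E → ℝ}
    (hρ : ContDiff ℝ ∞ ρ) (hρc : HasCompactSupport ρ) (x : E) :
    fderiv ℝ (ρ ⋆[.lsmul ℝ ℝ, μ] f) x = (ρ ⋆[.lsmul ℝ ℝ, μ] G) x := by
  have hreflect (t : E) : fderiv ℝ (fun t => ρ (x - t)) t = -fderiv ℝ ρ (x - t) := by
    simpa using! ((hρ.differentiable (by simp) (x - t)).hasFDerivAt.comp t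
      ((hasFDerivAt_id t).const_sub x)).fderiv
  have hparts := h.integral_smulRight (fun t => ρ (x - t))
    (hρ.comp (contDiff_const.sub contDiff_id)) (hρc.comp_homeomorph (Homeomorph.subLeft x))
  calc fderiv ℝ (ρ ⋆[.lsmul ℝ ℝ, μ] f) x
      = ∫ t, (fderiv ℝ ρ (x - t)).smulRight (f t) ∂μ := by
        rw [(hρc.hasFDerivAt_convolution_left (.lsmul ℝ ℝ) (hρ.of_le (by simp)) h.locallyIntegrable
          x).fderiv, convolution_eq_swap]
        congr with t w
    _ = ∫ t, ρ (x - t) • G t ∂μ := by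
        rw [← neg_inj, ← hparts, ← integral_neg]
        congr with t w
        simp [hreflect]
    _ = (ρ ⋆[.lsmul ℝ ℝ, μ] G) x := by
        rw [convolution_eq_swap]
        rfl

end WeakDerivative

section GagliardoNirenbergSobolev

lemma exists_cutoff_seq (E : Type*) [NormedAddCommGroup E] [NormedSpace ℝ E]
    [FiniteDimensional ℝ E] :
    ∃ (η : ℕ → E → ℝ) (ε : ℕ → ℝ≥0), (∀ n, ContDiff ℝ ∞ (η n)) ∧ (∀ n, HasCompactSupport (η n)) ∧
      (∀ n y, ‖η n y‖ ≤ 1) ∧ (∀ n y, ‖fderiv ℝ (η n) y‖ ≤ ε n) ∧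
      Tendsto ε atTop (𝓝 0) ∧ ∀ y, ∀ᶠ n in atTop, η n y = 1 := by
  let χ : ContDiffBump (0 : E) := ⟨1, 2, one_pos, one_lt_two⟩
  obtain ⟨M, hM⟩ := (χ.contDiff (n := 1)).continuous_fderiv (by simp)
    |>.bounded_above_of_compact_support (χ.hasCompactSupport.fderiv ℝ)
  refine ⟨fun n y => χ ((1 / (n + 1) : ℝ) • y), fun n => 1 / (n + 1) * M.toNNReal,
    fun n => χ.contDiff.comp (contDiff_const_smul _),
    fun n => χ.hasCompactSupport.comp_smul (by positivity), fun n y => ?_, fun n y => ?_, ?_,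
    fun y => ?_⟩
  · rw [Real.norm_of_nonneg χ.nonneg]
    exact χ.le_one
  · rw [fderiv_comp_smul, norm_smul, Real.norm_of_nonneg (by positivity)]
    push_cast
    gcongr
    exact (hM _).trans (Real.le_coe_toNNReal M)
  · simpa using (tendsto_one_div_add_atTop_nhds_zero_nat (𝕜 := ℝ≥0)).mul_const M.toNNReal
  · obtain ⟨N, hN⟩ := exists_nat_ge ‖y‖
    filter_upwards [eventually_ge_atTop N] with n hn
    refine χ.one_of_mem_closedBall (mem_closedBall_zero_iff.2 ?_)
    rw [norm_smul, Real.norm_of_nonneg (by positivity), one_div]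
    refine inv_mul_le_one_of_le₀ (hN.trans ?_) (by positivity)
    exact_mod_cast hn.trans n.le_succ

variable {E F : Type*} [NormedAddCommGroup E] [NormedSpace ℝ E] [FiniteDimensional ℝ E]
  [MeasurableSpace E] [BorelSpace E] [NormedAddCommGroup F] {μ : Measure E} [μ.IsAddHaarMeasure]

lemma eLpNorm_convolution_normed_le [NormedSpace ℝ F] {x : E} (φ : ContDiffBump x) {h : E → F}
    (hh : AEStronglyMeasurable h μ) {p : ℝ≥0} (hp : 1 ≤ p) :
    eLpNorm (φ.normed μ ⋆[.lsmul ℝ ℝ, μ] h) p μ ≤ eLpNorm h p μ := by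
  have hlsmul : ‖(.lsmul ℝ ℝ : ℝ →L[ℝ] F →L[ℝ] F)‖ₑ ≤ 1 :=
    enorm_le_coe.2 (ContinuousLinearMap.opNorm_lsmul_le (𝕜 := ℝ))
  have hmass : eLpNorm (φ.normed μ) 1 μ = 1 := by
    rw [eLpNorm_one_eq_lintegral_enorm,
      ← ofReal_integral_norm_eq_lintegral_enorm φ.integrable_normed]
    simp only [Real.norm_of_nonneg (φ.nonneg_normed _), φ.integral_normed, ENNReal.ofReal_one]
  calc eLpNorm (φ.normed μ ⋆[.lsmul ℝ ℝ, μ] h) p μ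
      ≤ ‖(.lsmul ℝ ℝ : ℝ →L[ℝ] F →L[ℝ] F)‖ₑ * eLpNorm (φ.normed μ) 1 μ * eLpNorm h p μ :=
        eLpNorm_convolution_le _ φ.continuous_normed.aestronglyMeasurable hh hp
    _ ≤ 1 * 1 * eLpNorm h p μ := by rw [hmass]; gcongr
    _ = eLpNorm h p μ := by simp

lemma HasWeakFDeriv.exists_contDiff_seq_tendsto [NormedSpace ℝ F] [CompleteSpace F] {f : E → F}
    {G : E → E →L[ℝ] F} (h : HasWeakFDeriv f G μ) (hf : HasCompactSupport f) {p : ℝ≥0}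
    (hp : 1 ≤ p) :
    ∃ u : ℕ → E → F, (∀ n, ContDiff ℝ 1 (u n)) ∧ (∀ n, HasCompactSupport (u n)) ∧
      (∀ n, eLpNorm (fderiv ℝ (u n)) p μ ≤ eLpNorm G p μ) ∧
      ∀ᵐ x ∂μ, Tendsto (fun n => u n x) atTop (𝓝 (f x)) := by
  let B (n : ℕ) : ContDiffBump (0 : E) :=
    ⟨1 / (n + 1), 2 / (n + 1), by positivity, by gcongr; norm_num⟩
  refine ⟨fun n => (B n).normed μ ⋆[.lsmul ℝ ℝ, μ] f, fun n => ?_, fun n => ?_, fun n => ?_, ?_⟩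
  · exact (B n).hasCompactSupport_normed.contDiff_convolution_left (.lsmul ℝ ℝ) (n := 1)
      (B n).contDiff_normed h.locallyIntegrable
  · exact (B n).hasCompactSupport_normed.convolution _ hf
  · rw [funext (h.fderiv_convolution (B n).contDiff_normed (B n).hasCompactSupport_normed)]
    exact eLpNorm_convolution_normed_le _ h.locallyIntegrable_fderiv.aestronglyMeasurable hp
  · refine ContDiffBump.ae_convolution_tendsto_right_of_locallyIntegrable (K := 2) ?_ ?_
      h.locallyIntegrable
    · simpa [B, div_eq_mul_inv] using
        (tendsto_one_div_add_atTop_nhds_zero_nat (𝕜 := ℝ)).const_mul 2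
    · exact .of_forall fun n => by simp [B, div_eq_mul_inv]

variable [InnerProductSpace ℝ F] [CompleteSpace F] {f : E → F} {G : E → E →L[ℝ] F} {p p' : ℝ≥0}

lemma HasWeakFDeriv.eLpNorm_le_of_hasCompactSupport (h : HasWeakFDeriv f G μ)
    (hf : HasCompactSupport f) (hp : 1 ≤ p) (hE : 0 < finrank ℝ E)
    (hp' : (p' : ℝ)⁻¹ = p⁻¹ - (finrank ℝ E : ℝ)⁻¹) :
    eLpNorm f p' μ ≤ eLpNormLESNormFDerivOfEqInnerConst μ p * eLpNorm G p μ := by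
  obtain ⟨u, hu, hu_supp, hu_le, hu_lim⟩ := h.exists_contDiff_seq_tendsto hf hp
  calc eLpNorm f p' μ
      ≤ liminf (fun n => eLpNorm (u n) p' μ) atTop :=
        Lp.eLpNorm_lim_le_liminf_eLpNorm (fun n => (hu n).continuous.aestronglyMeasurable) _ hu_lim
    _ ≤ liminf (fun _ : ℕ => eLpNormLESNormFDerivOfEqInnerConst μ p * eLpNorm G p μ) atTop :=
        liminf_le_liminf <| .of_forall fun n =>
          (eLpNorm_le_eLpNorm_fderiv_of_eq_inner μ (hu n) (hu_supp n) hp hE hp').trans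
            (by gcongr; exact hu_le n)
    _ = eLpNormLESNormFDerivOfEqInnerConst μ p * eLpNorm G p μ := liminf_const _

lemma HasWeakFDeriv.eLpNorm_smul_le (h : HasWeakFDeriv f G μ) {η : E → ℝ} (hη : ContDiff ℝ ∞ η)
    (hη_supp : HasCompactSupport η) (hη_le : ∀ y, ‖η y‖ ≤ 1) {ε : ℝ≥0}
    (hdη_le : ∀ y, ‖fderiv ℝ η y‖ ≤ ε) (hp : 1 ≤ p) (hE : 0 < finrank ℝ E)
    (hp' : (p' : ℝ)⁻¹ = p⁻¹ - (finrank ℝ E : ℝ)⁻¹) :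
    eLpNorm (fun y => η y • f y) p' μ
      ≤ eLpNormLESNormFDerivOfEqInnerConst μ p * (eLpNorm G p μ + ε * eLpNorm f p μ) := by
  have hηG_meas : AEStronglyMeasurable (fun y => η y • G y) μ :=
    hη.continuous.aestronglyMeasurable.smul h.locallyIntegrable_fderiv.aestronglyMeasurable
  have hηf_meas : AEStronglyMeasurable (fun y => (fderiv ℝ η y).smulRight (f y)) μ :=
    (locallyIntegrable_bilin (.smulRightL ℝ E F) (hη.continuous_fderiv (by simp))
      h.locallyIntegrable).aestronglyMeasurable
  have hηG_le : eLpNorm (fun y => η y • G y) p μ ≤ eLpNorm G p μ := by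
    refine eLpNorm_mono fun y => ?_
    rw [norm_smul]
    exact mul_le_of_le_one_left (norm_nonneg _) (hη_le y)
  have hηf_le : eLpNorm (fun y => (fderiv ℝ η y).smulRight (f y)) p μ ≤ ε * eLpNorm f p μ := by
    refine eLpNorm_le_nnreal_smul_eLpNorm_of_ae_le_mul (.of_forall fun y => ?_) _
    rw [ContinuousLinearMap.nnnorm_smulRight_apply]
    gcongr
    exact hdη_le y
  have hsupp : HasCompactSupport fun y => η y • f y := hη_supp.smul_right (f' := f)
  refine ((h.smul hη).eLpNorm_le_of_hasCompactSupport hsupp hp hE hp').trans ?_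
  gcongr
  exact (eLpNorm_add_le hηG_meas hηf_meas (by exact_mod_cast hp)).trans (add_le_add hηG_le hηf_le)

lemma HasWeakFDeriv.eLpNorm_le (h : HasWeakFDeriv f G μ) (hf : eLpNorm f p μ ≠ ⊤) (hp : 1 ≤ p)
    (hE : 0 < finrank ℝ E) (hp' : (p' : ℝ)⁻¹ = p⁻¹ - (finrank ℝ E : ℝ)⁻¹) :
    eLpNorm f p' μ ≤ eLpNormLESNormFDerivOfEqInnerConst μ p * eLpNorm G p μ := by
  obtain ⟨η, ε, hη, hη_supp, hη_le, hdη_le, hε, hη_eq⟩ := exists_cutoff_seq E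
  let C := eLpNormLESNormFDerivOfEqInnerConst μ p
  have hlim : Tendsto (fun n => C * (eLpNorm G p μ + ε n * eLpNorm f p μ)) atTop
      (𝓝 (C * eLpNorm G p μ)) := by
    have hε0 : Tendsto (fun n => (ε n : ℝ≥0∞) * eLpNorm f p μ) atTop (𝓝 (0 * eLpNorm f p μ)) :=
      ENNReal.Tendsto.mul_const (ENNReal.tendsto_coe.2 hε) (.inr hf)
    simpa using ENNReal.Tendsto.const_mul (hε0.const_add (eLpNorm G p μ)) (.inr ENNReal.coe_ne_top)
  calc eLpNorm f p' μ
      ≤ liminf (fun n => eLpNorm (fun y => η n y • f y) p' μ) atTop := by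
        have hmeas (n : ℕ) : AEStronglyMeasurable (fun y => η n y • f y) μ :=
          (hη n).continuous.aestronglyMeasurable.smul h.locallyIntegrable.aestronglyMeasurable
        refine Lp.eLpNorm_lim_le_liminf_eLpNorm hmeas _ (.of_forall fun y => ?_)
        refine tendsto_const_nhds.congr' ?_
        filter_upwards [hη_eq y] with n hn
        simp [hn]
    _ ≤ liminf (fun n => C * (eLpNorm G p μ + ε n * eLpNorm f p μ)) atTop :=
        liminf_le_liminf <| .of_forall fun n =>
          h.eLpNorm_smul_le (hη n) (hη_supp n) (hη_le n) (hdη_le n) hp hE hp'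
    _ = C * eLpNorm G p μ := hlim.liminf_eq

end GagliardoNirenbergSobolev

section Weights

lemma le_one_add_exp_mul_add_rpow {r s t p : ℝ} (hr : 0 ≤ r) (hs : 0 ≤ s) (ht : 0 ≤ t)
    (hp : 1 ≤ p) : t ≤ 1 + Real.exp r * (s + t ^ p) := by
  have ht_rpow : t ≤ 1 + t ^ p := by
    rcases le_total t 1 with ht1 | ht1
    · linarith [Real.rpow_nonneg ht p]
    · linarith [Real.self_le_rpow_of_one_le ht1 hp]
  calc t ≤ 1 + t ^ p := ht_rpow
    _ ≤ 1 + (s + t ^ p) := by gcongr; exact le_add_of_nonneg_left hs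
    _ ≤ 1 + Real.exp r * (s + t ^ p) := by
        gcongr
        exact le_mul_of_one_le_left (by positivity) (Real.one_le_exp hr)

lemma two_mul_mul_exp_mul_sq_le {a b : ℝ} (hab : a < b) (t : ℝ) :
    2 * t * Real.exp (a * t ^ 2) ≤ (1 + (b - a)⁻¹) * Real.exp (b * t ^ 2) := by
  have hδ : 0 < b - a := sub_pos.2 hab
  have hpoly : 2 * t ≤ (1 + (b - a)⁻¹) * (1 + (b - a) * t ^ 2) := by
    calc 2 * t ≤ 1 + t ^ 2 := by linarith [two_mul_le_add_sq t 1]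
      _ ≤ 1 + t ^ 2 + ((b - a)⁻¹ + (b - a) * t ^ 2) :=
        le_add_of_nonneg_right (by positivity)
      _ = (1 + (b - a)⁻¹) * (1 + (b - a) * t ^ 2) := by field_simp; ring
  calc 2 * t * Real.exp (a * t ^ 2)
      ≤ (1 + (b - a)⁻¹) * (1 + (b - a) * t ^ 2) * Real.exp (a * t ^ 2) :=
        mul_le_mul_of_nonneg_right hpoly (Real.exp_pos _).le
    _ ≤ (1 + (b - a)⁻¹) * Real.exp ((b - a) * t ^ 2) * Real.exp (a * t ^ 2) := by
        gcongr
        rw [add_comm]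
        exact Real.add_one_le_exp _
    _ = (1 + (b - a)⁻¹) * Real.exp (b * t ^ 2) := by
        rw [mul_assoc, ← Real.exp_add]
        ring_nf

lemma norm_fderiv_exp_mul_norm_sq_le {E : Type*} [NormedAddCommGroup E] [InnerProductSpace ℝ E]
    {a b : ℝ} (hab : a < b) (y : E) :
    ‖fderiv ℝ (fun y : E => Real.exp (a * ‖y‖ ^ 2)) y‖
      ≤ |a| * (1 + (b - a)⁻¹) * Real.exp (b * ‖y‖ ^ 2) := by
  have hsq : DifferentiableAt ℝ (fun y : E => ‖y‖ ^ 2) y :=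
    (contDiff_norm_sq ℝ).differentiable one_ne_zero y
  have hderiv : fderiv ℝ (fun y : E => Real.exp (a * ‖y‖ ^ 2)) y
      = Real.exp (a * ‖y‖ ^ 2) • a • 2 • innerSL ℝ y := by
    rw [fderiv_exp (hsq.const_mul a), fderiv_const_mul hsq, fderiv_norm_sq_apply]
  calc ‖fderiv ℝ (fun y : E => Real.exp (a * ‖y‖ ^ 2)) y‖
      = |a| * (2 * ‖y‖ * Real.exp (a * ‖y‖ ^ 2)) := by
        rw [hderiv, norm_smul, norm_smul, ← Nat.cast_smul_eq_nsmul ℝ, norm_smul, innerSL_apply_norm,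
          Real.norm_eq_abs, Real.abs_exp, Real.norm_eq_abs, Nat.cast_ofNat, Real.norm_ofNat]
        ring
    _ ≤ |a| * ((1 + (b - a)⁻¹) * Real.exp (b * ‖y‖ ^ 2)) :=
        mul_le_mul_of_nonneg_left (two_mul_mul_exp_mul_sq_le hab ‖y‖) (abs_nonneg a)
    _ = |a| * (1 + (b - a)⁻¹) * Real.exp (b * ‖y‖ ^ 2) := by ring

variable {E F : Type*} [NormedAddCommGroup E] [MeasurableSpace E] [BorelSpace E]
  [NormedAddCommGroup F] {μ : Measure E} {f : E → F} {p p' : ℝ≥0}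

lemma memLp_exp_smul_iff_integrable [NormedSpace ℝ F] (hf : AEStronglyMeasurable f μ) (hp : p ≠ 0)
    (c : ℝ) :
    MemLp (fun y => Real.exp (c / p * ‖y‖ ^ 2) • f y) p μ ↔
      Integrable (fun y => Real.exp (c * ‖y‖ ^ 2) * ‖f y‖ ^ (p : ℝ)) μ := by
  have hp0 : (p : ℝ) ≠ 0 := NNReal.coe_ne_zero.2 hp
  have hexp : Continuous fun y : E => Real.exp (c / p * ‖y‖ ^ 2) := by fun_prop
  have hmeas : AEStronglyMeasurable (fun y => Real.exp (c / p * ‖y‖ ^ 2) • f y) μ :=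
    hexp.aestronglyMeasurable.smul hf
  rw [← integrable_norm_rpow_iff hmeas (by simpa) ENNReal.coe_ne_top]
  refine integrable_congr (.of_forall fun y => ?_)
  simp only [ENNReal.coe_toReal]
  rw [norm_smul, Real.mul_rpow (norm_nonneg _) (norm_nonneg _), Real.norm_eq_abs, Real.abs_exp,
    ← Real.exp_mul]
  congr 2
  field_simp

lemma memLp_exp_smul_of_norm_rpow_le [NormedSpace ℝ F] {c : ℝ} {H : E → ℝ}
    (hf : AEStronglyMeasurable f μ) (hp : p ≠ 0)
    (hH : Integrable (fun y => Real.exp (c * ‖y‖ ^ 2) * H y) μ)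
    (hfH : ∀ y, ‖f y‖ ^ (p : ℝ) ≤ H y) :
    MemLp (fun y => Real.exp (c / p * ‖y‖ ^ 2) • f y) p μ := by
  have hexp : Continuous fun y : E => Real.exp (c * ‖y‖ ^ 2) := by fun_prop
  refine (memLp_exp_smul_iff_integrable hf hp c).2 <| hH.mono'
    (hexp.aestronglyMeasurable.mul (hf.norm.aemeasurable.pow_const _).aestronglyMeasurable)
    (.of_forall fun y => ?_)
  rw [Real.norm_of_nonneg (by positivity)]
  gcongr
  exact hfH y

section

variable [NormedSpace ℝ E] [FiniteDimensional ℝ E] [μ.IsAddHaarMeasure] [InnerProductSpace ℝ F]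
  [CompleteSpace F] {G : E → E →L[ℝ] F}

lemma HasWeakFDeriv.memLp (h : HasWeakFDeriv f G μ) (hf : MemLp f p μ) (hG : MemLp G p μ)
    (hp : 1 ≤ p) (hE : 0 < finrank ℝ E) (hp' : (p' : ℝ)⁻¹ = p⁻¹ - (finrank ℝ E : ℝ)⁻¹) :
    MemLp f p' μ :=
  ⟨hf.1, (h.eLpNorm_le hf.2.ne hp hE hp').trans_lt (ENNReal.mul_lt_top ENNReal.coe_lt_top hG.2)⟩

lemma HasWeakFDeriv.memLp_smul (h : HasWeakFDeriv f G μ) {w W : E → ℝ} (hw : ContDiff ℝ ∞ w)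
    (hwW : ∀ y, ‖w y‖ ≤ ‖W y‖) {M : ℝ} (hdwW : ∀ y, ‖fderiv ℝ w y‖ ≤ M * ‖W y‖)
    (hf : MemLp (fun y => W y • f y) p μ) (hG : MemLp (fun y => W y • G y) p μ)
    (hp : 1 ≤ p) (hE : 0 < finrank ℝ E) (hp' : (p' : ℝ)⁻¹ = p⁻¹ - (finrank ℝ E : ℝ)⁻¹) :
    MemLp (fun y => w y • f y) p' μ := by
  have hwf_meas : AEStronglyMeasurable (fun y => w y • f y) μ :=
    hw.continuous.aestronglyMeasurable.smul h.locallyIntegrable.aestronglyMeasurable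
  have hwG_meas : AEStronglyMeasurable (fun y => w y • G y) μ :=
    hw.continuous.aestronglyMeasurable.smul h.locallyIntegrable_fderiv.aestronglyMeasurable
  have hdwf_meas : AEStronglyMeasurable (fun y => (fderiv ℝ w y).smulRight (f y)) μ :=
    (locallyIntegrable_bilin (.smulRightL ℝ E F) (hw.continuous_fderiv (by simp))
      h.locallyIntegrable).aestronglyMeasurable
  have hwf : MemLp (fun y => w y • f y) p μ := by
    refine hf.mono hwf_meas (.of_forall fun y => ?_)
    rw [norm_smul, norm_smul]
    gcongr
    exact hwW y
  have hwG : MemLp (fun y => w y • G y) p μ := by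
    refine hG.mono hwG_meas (.of_forall fun y => ?_)
    rw [norm_smul, norm_smul]
    gcongr
    exact hwW y
  have hdwf : MemLp (fun y => (fderiv ℝ w y).smulRight (f y)) p μ := by
    refine hf.of_le_mul (c := M) hdwf_meas (.of_forall fun y => ?_)
    rw [ContinuousLinearMap.norm_smulRight_apply, norm_smul, ← mul_assoc]
    gcongr
    exact hdwW y
  have hsum : MemLp (fun y => w y • G y + (fderiv ℝ w y).smulRight (f y)) p μ :=
    MemLp.add (ε := E →L[ℝ] F) hwG hdwf
  exact (h.smul hw).memLp hwf hsum hp hE hp'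

end

lemma HasWeakFDeriv.memLp_exp_smul [InnerProductSpace ℝ E] [FiniteDimensional ℝ E]
    [μ.IsAddHaarMeasure] [InnerProductSpace ℝ F] [CompleteSpace F] {G : E → E →L[ℝ] F}
    (h : HasWeakFDeriv f G μ) {a b : ℝ} (hab : a < b)
    (hf : MemLp (fun y => Real.exp (b * ‖y‖ ^ 2) • f y) p μ)
    (hG : MemLp (fun y => Real.exp (b * ‖y‖ ^ 2) • G y) p μ)
    (hp : 1 ≤ p) (hE : 0 < finrank ℝ E) (hp' : (p' : ℝ)⁻¹ = p⁻¹ - (finrank ℝ E : ℝ)⁻¹) :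
    MemLp (fun y => Real.exp (a * ‖y‖ ^ 2) • f y) p' μ := by
  refine h.memLp_smul (M := |a| * (1 + (b - a)⁻¹))
    (Real.contDiff_exp.comp (contDiff_const.mul (contDiff_norm_sq ℝ))) (fun y => ?_) (fun y => ?_)
    hf hG hp hE hp'
  · rw [Real.norm_eq_abs, Real.norm_eq_abs, Real.abs_exp, Real.abs_exp]
    gcongr
  · rw [Real.norm_eq_abs, Real.abs_exp]
    exact norm_fderiv_exp_mul_norm_sq_le hab y

end Weights

section LineDerivative

variable {E F : Type*} [NormedAddCommGroup E] [NormedSpace ℝ E] [MeasurableSpace E]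
  [NormedAddCommGroup F] [NormedSpace ℝ F] {μ : Measure E}

/-- `f'` is a weak derivative of `f` in the direction `w`: integration by parts holds against every
test function. No regularity of `f'` is assumed, and where `φ • f'` is not integrable the identity
says that the left-hand side vanishes. -/
def HasWeakLineDeriv (f f' : E → F) (w : E) (μ : Measure E) : Prop :=
  ∀ φ : E → ℝ, ContDiff ℝ ∞ φ → HasCompactSupport φ →
    ∫ y, fderiv ℝ φ y w • f y ∂μ = -∫ y, φ y • f' y ∂μ

variable [FiniteDimensional ℝ E] {f f' : E → F} {w : E}

lemma aestronglyMeasurable_of_forall_contDiff_smul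
    (h : ∀ φ : E → ℝ, ContDiff ℝ ∞ φ → HasCompactSupport φ →
      AEStronglyMeasurable (fun y => φ y • f y) μ) :
    AEStronglyMeasurable f μ := by
  obtain ⟨η, -, hη, hη_supp, -, -, -, hη_eq⟩ := exists_cutoff_seq E
  refine aestronglyMeasurable_of_tendsto_ae atTop (fun n => h (η n) (hη n) (hη_supp n))
    (.of_forall fun y => tendsto_const_nhds.congr' ?_)
  filter_upwards [hη_eq y] with n hn
  rw [hn, one_smul]

variable [BorelSpace E]

-- `∫ ∂_w φ • f` is linear in `φ` and vanishes when `φ • f'` is not measurable. This applies to some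
-- `ψ`, and to `φ + ψ` whenever `φ • f'` is measurable.
lemma HasWeakLineDeriv.zero_of_not_aestronglyMeasurable (h : HasWeakLineDeriv f f' w μ)
    (hf : LocallyIntegrable f μ) (hf' : ¬ AEStronglyMeasurable f' μ) :
    HasWeakLineDeriv f 0 w μ := by
  have hint (φ : E → ℝ) (hφ : ContDiff ℝ ∞ φ) (hφc : HasCompactSupport φ) :
      Integrable (fun y => fderiv ℝ φ y w • f y) μ :=
    integrable_bilin_of_hasCompactSupport (.lsmul ℝ ℝ)
      ((hφ.continuous_fderiv (by simp)).clm_apply continuous_const) (hφc.fderiv_apply ℝ w) hf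
  have hzero (φ : E → ℝ) (hφ : ContDiff ℝ ∞ φ) (hφc : HasCompactSupport φ)
      (hφf' : ¬ AEStronglyMeasurable (fun y => φ y • f' y) μ) :
      ∫ y, fderiv ℝ φ y w • f y ∂μ = 0 := by
    rw [h φ hφ hφc, integral_undef (mt Integrable.aestronglyMeasurable hφf'), neg_zero]
  obtain ⟨ψ, hψ, hψc, hψf'⟩ : ∃ ψ : E → ℝ, ContDiff ℝ ∞ ψ ∧ HasCompactSupport ψ ∧
      ¬ AEStronglyMeasurable (fun y => ψ y • f' y) μ := by
    contrapose! hf'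
    exact aestronglyMeasurable_of_forall_contDiff_smul hf'
  intro φ hφ hφc
  suffices hφ0 : ∫ y, fderiv ℝ φ y w • f y ∂μ = 0 by simpa using hφ0
  by_cases hφf' : AEStronglyMeasurable (fun y => φ y • f' y) μ
  · have hsum : ∫ y, fderiv ℝ (fun y => φ y + ψ y) y w • f y ∂μ = 0 := by
      refine hzero _ (hφ.add hψ) (hφc.add hψc) fun hφψ => hψf' ?_
      simpa only [add_smul, Pi.sub_def, add_sub_cancel_left] using hφψ.sub hφf'
    have hadd (y : E) : fderiv ℝ (fun y => φ y + ψ y) y w • f y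
        = fderiv ℝ φ y w • f y + fderiv ℝ ψ y w • f y := by
      rw [fderiv_fun_add (hφ.differentiable (by simp) y) (hψ.differentiable (by simp) y),
        add_apply, add_smul]
    simp only [hadd] at hsum
    rwa [integral_add (hint φ hφ hφc) (hint ψ hψ hψc), hzero ψ hψ hψc hψf', add_zero] at hsum
  · exact hzero φ hφ hφc hφf'

lemma HasWeakLineDeriv.exists_aestronglyMeasurable (h : HasWeakLineDeriv f f' w μ)
    (hf : LocallyIntegrable f μ) :
    ∃ f'' : E → F, AEStronglyMeasurable f'' μ ∧ HasWeakLineDeriv f f'' w μ ∧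
      ∀ y, ‖f'' y‖ ≤ ‖f' y‖ := by
  by_cases hf' : AEStronglyMeasurable f' μ
  · exact ⟨f', hf', h, fun _ => le_rfl⟩
  · exact ⟨0, aestronglyMeasurable_zero, h.zero_of_not_aestronglyMeasurable hf hf',
      fun y => by simp⟩

lemma HasWeakFDeriv.of_basis {ι : Type*} (b : Basis ι ℝ E) {G : E → E →L[ℝ] F}
    (hf : LocallyIntegrable f μ) (hG : LocallyIntegrable G μ)
    (h : ∀ i, HasWeakLineDeriv f (fun y => G y (b i)) (b i) μ) :
    HasWeakFDeriv f G μ where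
  locallyIntegrable := hf
  locallyIntegrable_fderiv := hG
  integral_smulRight φ hφ hφc := by
    have hdφf : Integrable (fun y => (fderiv ℝ φ y).smulRight (f y)) μ :=
      integrable_smulRight_of_hasCompactSupport (hφ.continuous_fderiv (by simp)) (hφc.fderiv ℝ) hf
    have hφG : Integrable (fun y => φ y • G y) μ :=
      integrable_bilin_of_hasCompactSupport (.lsmul ℝ ℝ) hφ.continuous hφc hG
    refine ContinuousLinearMap.coe_injective (b.ext fun i => ?_)
    simpa [ContinuousLinearMap.integral_apply hdφf, ContinuousLinearMap.integral_apply hφG]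
      using h i φ hφ hφc

end LineDerivative

section Euclidean

variable {ι : Type*} [Fintype ι] {v : EuclideanSpace ℝ ι → ℝ}
  {g : EuclideanSpace ℝ ι → EuclideanSpace ℝ ι}

lemma exists_hasWeakFDeriv_of_single [DecidableEq ι] (hv : LocallyIntegrable v)
    (hvg : ∀ i, HasWeakLineDeriv v (fun y => g y i) (EuclideanSpace.single i 1) volume)
    {b : EuclideanSpace ℝ ι → ℝ} (hb : LocallyIntegrable b) (hgb : ∀ y, ‖g y‖ ≤ b y) :
    ∃ G, HasWeakFDeriv v G volume ∧ ∀ y, ‖G y‖ ≤ ‖g y‖ := by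
  choose g' hg'_meas hvg' hg'_le using fun i => (hvg i).exists_aestronglyMeasurable hv
  let G (y : EuclideanSpace ℝ ι) : StrongDual ℝ (EuclideanSpace ℝ ι) :=
    innerSL ℝ (WithLp.toLp 2 fun i => g' i y)
  have hG_le (y : EuclideanSpace ℝ ι) : ‖G y‖ ≤ ‖g y‖ := by
    rw [innerSL_apply_norm, EuclideanSpace.norm_eq, EuclideanSpace.norm_eq]
    gcongr with i
    exact hg'_le i y
  have hG_meas : AEStronglyMeasurable G volume :=
    (innerSL ℝ).continuous.comp_aestronglyMeasurable <|
      (PiLp.continuous_toLp 2 _).comp_aestronglyMeasurable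
        (aemeasurable_pi_iff.2 fun i => (hg'_meas i).aemeasurable).aestronglyMeasurable
  have hG : LocallyIntegrable G := hb.mono hG_meas <| .of_forall fun y =>
    ((hG_le y).trans (hgb y)).trans (Real.le_norm_self _)
  refine ⟨G, .of_basis (EuclideanSpace.basisFun ι ℝ).toBasis hv hG fun i => ?_, hG_le⟩
  simpa [G, EuclideanSpace.inner_single_right] using hvg' i

theorem stmt_12_general [DecidableEq ι] {p q : ℝ≥0} (hp : 1 ≤ p) (hpι : p < Fintype.card ι)
    (hpq : (q : ℝ)⁻¹ = (p : ℝ)⁻¹ - (Fintype.card ι : ℝ)⁻¹) {c : ℝ} (hc : 0 < c)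
    (hv : LocallyIntegrable v)
    (hvg : ∀ i, HasWeakLineDeriv v (fun y => g y i) (EuclideanSpace.single i 1) volume)
    (hint : Integrable fun y => Real.exp (c * ‖y‖ ^ 2) * (‖v y‖ ^ (p : ℝ) + ‖g y‖ ^ (p : ℝ))) :
    Integrable fun y => Real.exp (c * ‖y‖ ^ 2) * ‖v y‖ ^ (q : ℝ) := by
  have hp0 : 0 < p := zero_lt_one.trans_le hp
  have hq_inv : (0 : ℝ) < (q : ℝ)⁻¹ := by
    rw [hpq, sub_pos]
    exact inv_strictAnti₀ (by exact_mod_cast hp0) (by exact_mod_cast hpι)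
  have hq : (q : ℝ)⁻¹ < (p : ℝ)⁻¹ := by
    have hcard : (0 : ℝ) < Fintype.card ι := by exact_mod_cast hp0.trans hpι
    rw [hpq]
    exact sub_lt_self _ (inv_pos.2 hcard)
  obtain ⟨G, hG, hG_le⟩ := exists_hasWeakFDeriv_of_single hv hvg
    ((locallyIntegrable_const 1).add hint.locallyIntegrable) fun y =>
      le_one_add_exp_mul_add_rpow (by positivity) (by positivity) (norm_nonneg _)
        (by exact_mod_cast hp)
  have hvp : MemLp (fun y => Real.exp (c / p * ‖y‖ ^ 2) • v y) p :=
    memLp_exp_smul_of_norm_rpow_le hv.aestronglyMeasurable hp0.ne' hint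
      fun y => le_add_of_nonneg_right (by positivity)
  have hGp : MemLp (fun y => Real.exp (c / p * ‖y‖ ^ 2) • G y) p :=
    memLp_exp_smul_of_norm_rpow_le hG.locallyIntegrable_fderiv.aestronglyMeasurable hp0.ne' hint
      fun y => (Real.rpow_le_rpow (norm_nonneg _) (hG_le y) p.coe_nonneg).trans
        (le_add_of_nonneg_left (by positivity))
  refine (memLp_exp_smul_iff_integrable hv.aestronglyMeasurable (by simpa using hq_inv.ne') c).1 <|
    hG.memLp_exp_smul ?_ hvp hGp hp ?_ ?_
  · simpa only [div_eq_mul_inv] using mul_lt_mul_of_pos_left hq hc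
  · rw [finrank_euclideanSpace]
    exact_mod_cast hp0.trans hpι
  · rw [finrank_euclideanSpace, hpq, NNReal.coe_inv]

end Euclidean

/-- Weighted Sobolev embedding in dimension three:
`H¹(K) ⊆ L⁶(K)`. -/
theorem stmt_12 (v : EuclideanSpace ℝ (Fin 3) → ℝ)
    (g : EuclideanSpace ℝ (Fin 3) → EuclideanSpace ℝ (Fin 3))
    (hvg : HasWeakGradient v g)
    (hint : Integrable (fun y : EuclideanSpace ℝ (Fin 3) =>
      Real.exp (‖y‖ ^ 2 / 4) * ((v y) ^ 2 + ‖g y‖ ^ 2))) :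
    (∫⁻ y : EuclideanSpace ℝ (Fin 3),
      ENNReal.ofReal (Real.exp (‖y‖ ^ 2 / 4) * (v y) ^ 6)) < ⊤ := by
  have hvg_line (i : Fin 3) :
      HasWeakLineDeriv v (fun y => g y i) (EuclideanSpace.single i 1) volume :=
    fun φ hφ hφc => by simpa only [smul_eq_mul, mul_comm] using hvg.2 φ hφ hφc i
  have hK (y : EuclideanSpace ℝ (Fin 3)) : ‖y‖ ^ 2 / 4 = 1 / 4 * ‖y‖ ^ 2 := by ring
  have h6 := stmt_12_general (p := 2) (q := 6) (c := 1 / 4) one_le_two (by norm_num) (by norm_num)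
    (by norm_num) hvg.1 hvg_line (by simpa [hK] using hint)
  simpa [hK, (by decide : Even 6).pow_abs] using h6.lintegral_lt_top
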